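/- Let p > 2 be a prime, τ = (k_1,…,k_n) and α = (ℓ_1,…,ℓ_m) types with α ≤ τ. Then the minimum of the minimal number of generators of A(τ)/N, taken over all subgroups N ≤ A(τ) = ∏_{j=1}^n ℤ/p^{k_j}ℤ isomorphic to A(α) = ∏_{i=1}^m ℤ/p^{ℓ_i}ℤ, equals u^τ_α := max{ j − f^τ_α(j) : 1 ≤ j ≤ n }, where f^τ_α(j) = max({ i ∈ {1,…,m} : ℓ_i ≥ k_j } ∪ {0}). In particular some subgroup N of A(τ) isomorphic to A(α) attains this value. -/

import Mathlib

/-- The minimal number of generators of an additive group: the least cardinality of a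
finite generating set. -/
noncomputable def minGen (G : Type) [AddGroup G] : ℕ :=
  sInf { r | ∃ S : Finset G, S.card = r ∧ AddSubgroup.closure (S : Set G) = ⊤ }

/-- `f^τ_α(j) = max ({ i ∈ {1,…,m} : ℓ_i ≥ k_j } ∪ {0})`, with `j` 1-based
(so `k_j` is `k ⟨j-1⟩` and index `i` is represented by `(i : Fin m)` with value `i+1`). -/
def fTA {n m : ℕ} (k : Fin n → ℕ) (l : Fin m → ℕ) (j : Fin n) : ℕ :=
  (Finset.univ.filter (fun i : Fin m => k j ≤ l i)).sup (fun i => (i : ℕ) + 1)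

/-- `u^τ_α = max { j − f^τ_α(j) : 1 ≤ j ≤ n }`. -/
def uTA {n m : ℕ} (k : Fin n → ℕ) (l : Fin m → ℕ) : ℕ :=
  Finset.univ.sup (fun j : Fin n => ((j : ℕ) + 1) - fTA k l j)

theorem fTA_card_le {n m : ℕ} (k : Fin n → ℕ) (l : Fin m → ℕ) (j : Fin n) :
    (Finset.univ.filter (fun i : Fin m => k j ≤ l i)).card ≤ fTA k l j := by
  have : (Finset.univ.filter (fun i : Fin m => k j ≤ l i)).card ≤
      (Finset.range (fTA k l j)).card := by
    refine Finset.card_le_card_of_injOn (fun i => (i : ℕ)) ?_ ?_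
    · intro i hi
      have := Finset.le_sup (f := fun i : Fin m => (i : ℕ) + 1) (Finset.mem_coe.1 hi)
      simp only [Finset.coe_range, Set.mem_Iio]
      unfold fTA
      exact this
    · intro a _ b _ h
      exact Fin.ext h
  simpa using this

theorem exists_shift {n m : ℕ} (k : Fin n → ℕ) (l : Fin m → ℕ) (hl : Antitone l)
    (j : Fin n) (hj : uTA k l ≤ j) :
    ∃ h : (j : ℕ) - uTA k l < m, k j ≤ l ⟨(j : ℕ) - uTA k l, h⟩ := by
  have h1 : ((j : ℕ) + 1) - fTA k l j ≤ uTA k l :=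
    Finset.le_sup (f := fun j : Fin n => ((j : ℕ) + 1) - fTA k l j) (Finset.mem_univ j)
  have hne : (Finset.univ.filter (fun i : Fin m => k j ≤ l i)).Nonempty := by
    by_contra hc
    rw [Finset.not_nonempty_iff_eq_empty] at hc
    have : fTA k l j = 0 := by simp [fTA, hc]
    omega
  obtain ⟨i, hi, hi2⟩ := Finset.exists_mem_eq_sup _ hne (fun i : Fin m => (i : ℕ) + 1)
  have hi3 : fTA k l j = i + 1 := hi2
  have hlt := i.2
  refine ⟨by omega, ?_⟩
  refine le_trans (Finset.mem_filter.1 hi).2 (hl ?_)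
  rw [Fin.le_def]
  simp only
  omega

theorem exists_inj (p : ℕ) (hp : p.Prime) (a b : ℕ) (h : a ≤ b) :
    ∃ f : ZMod (p ^ a) →+ ZMod (p ^ b), Function.Injective f := by
  have hz : ((p ^ b : ℕ) : ZMod (p ^ b)) = 0 := ZMod.natCast_self _
  refine ⟨ZMod.lift (p ^ a) ⟨(AddMonoidHom.mulLeft ((p ^ (b - a) : ℕ) : ZMod (p ^ b))).comp
    (Int.castAddHom _), ?_⟩, ?_⟩
  · simp only [AddMonoidHom.comp_apply, Int.coe_castAddHom, AddMonoidHom.coe_mulLeft,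
      Int.cast_natCast]
    rw [← Nat.cast_mul, ← pow_add, Nat.sub_add_cancel h, hz]
  · rw [ZMod.lift_injective]
    intro z hzz
    simp only [AddMonoidHom.comp_apply, Int.coe_castAddHom, AddMonoidHom.coe_mulLeft] at hzz
    rw [← Int.cast_natCast, ← Int.cast_mul, ZMod.intCast_zmod_eq_zero_iff_dvd] at hzz
    rw [ZMod.intCast_zmod_eq_zero_iff_dvd]
    push_cast at hzz ⊢
    have hp0 : ((p : ℤ) ^ (b - a)) ≠ 0 := pow_ne_zero _ (by exact_mod_cast hp.ne_zero)
    rw [← Nat.sub_add_cancel h, pow_add, Nat.sub_add_cancel h] at hzz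
    exact (mul_dvd_mul_iff_left hp0).1 hzz

theorem cast_zero_of_torsion (p : ℕ) (hp : p.Prime) (a b : ℕ) (h : a < b)
    (hd : p ∣ p ^ b) (x : ZMod (p ^ b)) (hx : p ^ a • x = 0) :
    ZMod.castHom hd (ZMod p) x = 0 := by
  obtain ⟨z, rfl⟩ := ZMod.intCast_surjective x
  rw [map_intCast, ZMod.intCast_zmod_eq_zero_iff_dvd]
  rw [nsmul_eq_mul, ← Int.cast_natCast, ← Int.cast_mul, ZMod.intCast_zmod_eq_zero_iff_dvd] at hx
  push_cast at hx
  have hp0 : ((p : ℤ) ^ a) ≠ 0 := pow_ne_zero _ (by exact_mod_cast hp.ne_zero)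
  have h2 : (p : ℤ) ^ a * p ∣ (p : ℤ) ^ b := by
    rw [← pow_succ]; exact pow_dvd_pow _ h
  exact (mul_dvd_mul_iff_left hp0).1 (h2.trans hx)

theorem lower_aux
    (p : ℕ) (hp : p.Prime)
    (n m : ℕ) (k : Fin n → ℕ) (l : Fin m → ℕ)
    (hk : Antitone k) (hk1 : ∀ j, 1 ≤ k j)
    (N : AddSubgroup ((j : Fin n) → ZMod (p ^ k j)))
    (e : N ≃+ ((i : Fin m) → ZMod (p ^ l i)))
    (S : Finset (((j : Fin n) → ZMod (p ^ k j)) ⧸ N))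
    (hS : AddSubgroup.closure (S : Set (((j : Fin n) → ZMod (p ^ k j)) ⧸ N)) = ⊤)
    (j : Fin n) : (j : ℕ) + 1 ≤ S.card + fTA k l j := by
  classical
  haveI : Fact p.Prime := ⟨hp⟩
  have hd : ∀ i, p ∣ p ^ k i := fun i => dvd_pow_self p (by have := hk1 i; omega)
  have hjn : (j : ℕ) + 1 ≤ n := j.2
  let P : ((j : Fin n) → ZMod (p ^ k j)) →+ (Fin ((j : ℕ) + 1) → ZMod p) :=
    { toFun := fun a i => ZMod.castHom (hd (Fin.castLE hjn i)) (ZMod p) (a (Fin.castLE hjn i))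
      map_zero' := by ext i; simp only [Pi.zero_apply, map_zero]
      map_add' := by intro a b; ext i; simp only [Pi.add_apply, map_add] }
  have hP : ∀ a i, P a i = ZMod.castHom (hd (Fin.castLE hjn i)) (ZMod p) (a (Fin.castLE hjn i)) :=
    fun _ _ => rfl
  have hPs : Function.Surjective P := by
    intro v
    refine ⟨fun i => if h : (i : ℕ) < j + 1 then ((v ⟨i, h⟩).val : ZMod (p ^ k i)) else 0, ?_⟩
    ext i
    rw [hP]
    have : ((Fin.castLE hjn i : Fin n) : ℕ) < j + 1 := i.2
    rw [dif_pos this, map_natCast]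
    exact ZMod.natCast_zmod_val _
  let F := Finset.univ.filter (fun i : Fin m => k j ≤ l i)
  let g : Fin m → ((j : Fin n) → ZMod (p ^ k j)) := fun i => (e.symm (Pi.single i 1) : N)
  let T : Finset (Fin ((j : ℕ) + 1) → ZMod p) :=
    S.image (fun s => P (Quotient.out s)) ∪ F.image (fun i => P (g i))
  let W : Submodule (ZMod p) (Fin ((j : ℕ) + 1) → ZMod p) := Submodule.span (ZMod p) T
  have hTW : ∀ t ∈ T, t ∈ W := fun t ht => Submodule.subset_span ht
  let K : AddSubgroup ((j : Fin n) → ZMod (p ^ k j)) := W.toAddSubgroup.comap P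
  have hK : ∀ a, a ∈ K ↔ P a ∈ W := fun _ => Iff.rfl
  have hg : ∀ i, g i ∈ K := by
    intro i
    by_cases hi : k j ≤ l i
    · rw [hK]
      apply hTW
      apply Finset.mem_union_right
      exact Finset.mem_image_of_mem _ (Finset.mem_filter.2 ⟨Finset.mem_univ _, hi⟩)
    · push Not at hi
      have h0 : p ^ l i • g i = 0 := by
        change p ^ l i • ((e.symm (Pi.single i 1) : N) : (j : Fin n) → ZMod (p ^ k j)) = 0
        rw [← AddSubgroup.coe_nsmul, ← map_nsmul, ← Pi.single_smul]
        rw [nsmul_eq_mul, ZMod.natCast_self, zero_mul, Pi.single_zero, map_zero]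
        rfl
      have : P (g i) = 0 := by
        ext i'
        rw [hP]
        apply cast_zero_of_torsion p hp (l i) _ _
        · exact congrFun h0 _
        · refine lt_of_lt_of_le hi (hk ?_)
          rw [Fin.le_def]
          have := i'.2
          simp only [Fin.val_castLE]
          omega
      rw [hK, this]
      exact W.zero_mem
  have hNK : N ≤ K := by
    intro x hx
    have h1 : (⟨x, hx⟩ : N) = e.symm (e ⟨x, hx⟩) := by simp
    have key : ∀ y : (i : Fin m) → ZMod (p ^ l i),
        ((e.symm y : N) : (j : Fin n) → ZMod (p ^ k j)) ∈ K := by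
      intro y
      rw [← Finset.univ_sum_single y, map_sum, AddSubgroup.val_finsetSum]
      refine AddSubgroup.sum_mem _ fun i _ => ?_
      obtain ⟨z, hz⟩ := ZMod.intCast_surjective (y i)
      have : Pi.single i (y i) = z • (Pi.single i 1 : (i : Fin m) → ZMod (p ^ l i)) := by
        rw [← Pi.single_smul, ← hz, zsmul_eq_mul, mul_one]
      rw [this, map_zsmul, AddSubgroup.coe_zsmul]
      exact AddSubgroup.zsmul_mem _ (hg i) _
    have := key (e ⟨x, hx⟩)
    rwa [← h1] at this
  have hKtop : ∀ a, a ∈ K := by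
    intro a
    have h1 : AddSubgroup.closure (S : Set (((j : Fin n) → ZMod (p ^ k j)) ⧸ N)) ≤
        K.map (QuotientAddGroup.mk' N) := by
      rw [AddSubgroup.closure_le]
      intro s hs
      refine ⟨Quotient.out s, ?_, ?_⟩
      · change P (Quotient.out s) ∈ W
        apply hTW
        apply Finset.mem_union_left
        exact Finset.mem_image_of_mem (fun s => P (Quotient.out s)) hs
      · exact QuotientAddGroup.out_eq' s
    rw [hS] at h1
    obtain ⟨b, hb, hab⟩ := h1 (AddSubgroup.mem_top (QuotientAddGroup.mk' N a))
    have h2 : -b + a ∈ N := QuotientAddGroup.eq.1 hab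
    have := K.add_mem hb (hNK h2)
    simpa using this
  have hW : W = ⊤ := by
    rw [eq_top_iff]
    intro v _
    obtain ⟨a, rfl⟩ := hPs v
    exact hKtop a
  have hc : Module.finrank (ZMod p) W ≤ T.card := finrank_span_finset_le_card T
  rw [hW, finrank_top, Module.finrank_fin_fun] at hc
  have h1 : T.card ≤ S.card + F.card :=
    (Finset.card_union_le _ _).trans (Nat.add_le_add Finset.card_image_le Finset.card_image_le)
  have h2 : F.card ≤ fTA k l j := fTA_card_le k l j
  omega

theorem lower_bound
    (p : ℕ) (hp : p.Prime)
    (n m : ℕ) (k : Fin n → ℕ) (l : Fin m → ℕ)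
    (hk : Antitone k) (hk1 : ∀ j, 1 ≤ k j)
    (N : AddSubgroup ((j : Fin n) → ZMod (p ^ k j)))
    (e : N ≃+ ((i : Fin m) → ZMod (p ^ l i))) :
    uTA k l ≤ minGen (((j : Fin n) → ZMod (p ^ k j)) ⧸ N) := by
  classical
  haveI : NeZero p := ⟨hp.ne_zero⟩
  haveI : Finite (((j : Fin n) → ZMod (p ^ k j)) ⧸ N) := Quotient.finite _
  haveI : Fintype (((j : Fin n) → ZMod (p ^ k j)) ⧸ N) := Fintype.ofFinite _
  unfold minGen
  refine le_csInf ⟨_, Finset.univ, rfl, by simp⟩ ?_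
  rintro r ⟨S, rfl, hS⟩
  refine Finset.sup_le fun j _ => ?_
  have := lower_aux p hp n m k l hk hk1 N e S hS j
  omega

theorem upper_bound
    (p : ℕ) (hp : p.Prime)
    (n m : ℕ) (k : Fin n → ℕ) (l : Fin m → ℕ)
    (hl : Antitone l)
    (hmn : m ≤ n) (hle : ∀ i : Fin m, l i ≤ k (Fin.castLE hmn i))
    (u : ℕ) (hu : 0 < u)
    (hsh : ∀ j : Fin n, u ≤ j → ∃ h : (j : ℕ) - u < m, k j ≤ l ⟨(j : ℕ) - u, h⟩) :
    ∃ N : AddSubgroup ((j : Fin n) → ZMod (p ^ k j)),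
        Nonempty (N ≃+ ((i : Fin m) → ZMod (p ^ l i))) ∧
        minGen (((j : Fin n) → ZMod (p ^ k j)) ⧸ N) ≤ u := by
  classical
  choose f hf using fun i : Fin m => exists_inj p hp _ _ (hle i)
  choose hs1 hs2 using hsh
  let A : (j : Fin n) → ((i : Fin m) → ZMod (p ^ l i)) →+ ZMod (p ^ k j) := fun j =>
    if h : (j : ℕ) < m then (f ⟨j, h⟩).comp (Pi.evalAddMonoidHom (fun i : Fin m => ZMod (p ^ l i)) ⟨j, h⟩) else 0
  let B : (j : Fin n) → ((i : Fin m) → ZMod (p ^ l i)) →+ ZMod (p ^ k j) := fun j =>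
    if h : u ≤ (j : ℕ) then
      (ZMod.castHom (pow_dvd_pow p (hs2 j h)) (ZMod (p ^ k j))).toAddMonoidHom.comp
        (Pi.evalAddMonoidHom (fun i : Fin m => ZMod (p ^ l i)) ⟨(j : ℕ) - u, hs1 j h⟩) else 0
  have hA1 : ∀ (i : Fin m) a, A (Fin.castLE hmn i) a = f i (a i) := by
    intro i a
    have : ((Fin.castLE hmn i : Fin n) : ℕ) < m := i.2
    simp only [A]
    rw [dif_pos this]
    rfl
  have hA0 : ∀ (j : Fin n) a, ¬ (j : ℕ) < m → A j a = 0 := by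
    intro j a h
    simp only [A]
    rw [dif_neg h]
    rfl
  have hB1 : ∀ (j : Fin n) (h : u ≤ (j : ℕ)) a, B j a =
      ZMod.castHom (pow_dvd_pow p (hs2 j h)) (ZMod (p ^ k j)) (a ⟨(j : ℕ) - u, hs1 j h⟩) := by
    intro j h a
    simp only [B]
    rw [dif_pos h]
    rfl
  have hB0 : ∀ (j : Fin n) a, ¬ u ≤ (j : ℕ) → B j a = 0 := by
    intro j a h
    simp only [B]
    rw [dif_neg h]
    rfl
  let φ : ((i : Fin m) → ZMod (p ^ l i)) →+ ((j : Fin n) → ZMod (p ^ k j)) :=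
    Pi.addMonoidHom (fun j => A j + B j)
  have hφ : ∀ a j, φ a j = A j a + B j a := fun _ _ => rfl
  have hinj : Function.Injective φ := by
    rw [injective_iff_map_eq_zero]
    intro a ha
    have key : ∀ (t : ℕ) (ht : t < m), a ⟨t, ht⟩ = 0 := by
      intro t
      induction t using Nat.strong_induction_on with
      | _ t ih =>
        intro ht
        have h1 := congrFun ha (Fin.castLE hmn ⟨t, ht⟩)
        rw [hφ, hA1] at h1
        have hB : B (Fin.castLE hmn ⟨t, ht⟩) a = 0 := by
          by_cases h : u ≤ t
          · rw [hB1 _ h]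
            have := ih (t - u) (by omega) (by omega)
            exact (congrArg _ this).trans (map_zero _)
          · exact hB0 _ _ h
        rw [hB, add_zero] at h1
        exact (injective_iff_map_eq_zero (f ⟨t, ht⟩)).1 (hf _) _ h1
    ext i
    rw [key i i.2]
    rfl
  refine ⟨φ.range, ⟨(AddMonoidHom.ofInjective hinj).symm⟩, ?_⟩
  let S : Finset (((j : Fin n) → ZMod (p ^ k j)) ⧸ φ.range) :=
    (Finset.univ.filter (fun j : Fin n => (j : ℕ) < u)).image
      (fun j => QuotientAddGroup.mk' φ.range (Pi.single j 1))
  have hcard : S.card ≤ u := by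
    refine Finset.card_image_le.trans ?_
    have : (Finset.univ.filter (fun j : Fin n => (j : ℕ) < u)).card ≤ (Finset.range u).card := by
      refine Finset.card_le_card_of_injOn (fun i => (i : ℕ)) ?_ ?_
      · intro i hi
        simpa using hi
      · intro a _ b _ h
        exact Fin.ext h
    simpa using this
  have hgen : AddSubgroup.closure (S : Set (((j : Fin n) → ZMod (p ^ k j)) ⧸ φ.range)) = ⊤ := by
    set H := AddSubgroup.closure (S : Set (((j : Fin n) → ZMod (p ^ k j)) ⧸ φ.range)) with hH
    have key : ∀ (t : ℕ) (ht : t < n) (x : ZMod (p ^ k ⟨t, ht⟩)),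
        QuotientAddGroup.mk' φ.range (Pi.single ⟨t, ht⟩ x) ∈ H := by
      intro t
      induction t using Nat.strong_induction_on with
      | _ t ih =>
        intro ht x
        by_cases h : u ≤ t
        · have hm := hs1 ⟨t, ht⟩ h
          simp only at hm
          obtain ⟨y, hy⟩ := ZMod.castHom_surjective (pow_dvd_pow p (hs2 ⟨t, ht⟩ h)) x
          have e1 : φ (Pi.single ⟨t - u, hm⟩ y) =
              Pi.single (Fin.castLE hmn ⟨t - u, hm⟩) (f _ y) + Pi.single ⟨t, ht⟩ x := by
            funext j
            rw [hφ, Pi.add_apply]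
            congr 1
            · by_cases hj : (j : ℕ) < m
              · obtain ⟨i, rfl⟩ : ∃ i : Fin m, j = Fin.castLE hmn i := ⟨⟨j, hj⟩, rfl⟩
                rw [hA1]
                by_cases hi : i = ⟨t - u, hm⟩
                · subst hi
                  rw [Pi.single_eq_same, Pi.single_eq_same]
                · rw [Pi.single_eq_of_ne hi, Pi.single_eq_of_ne, map_zero]
                  intro hc
                  exact hi (Fin.castLE_injective hmn hc)
              · rw [hA0 _ _ hj, Pi.single_eq_of_ne]
                rintro rfl
                exact hj hm
            · by_cases hj : u ≤ (j : ℕ)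
              · rw [hB1 _ hj]
                by_cases hjt : j = ⟨t, ht⟩
                · subst hjt
                  rw [Pi.single_eq_same, ← hy, Pi.single_eq_same]
                · rw [Pi.single_eq_of_ne hjt, Pi.single_eq_of_ne, map_zero]
                  intro hc
                  apply hjt
                  rw [Fin.mk.injEq] at hc
                  apply Fin.ext
                  simp only
                  omega
              · rw [hB0 _ _ hj, Pi.single_eq_of_ne]
                rintro rfl
                exact hj h
          have e2 : QuotientAddGroup.mk' φ.range (φ (Pi.single ⟨t - u, hm⟩ y)) = 0 :=
            (QuotientAddGroup.eq_zero_iff _).2 ⟨_, rfl⟩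
          rw [e1, map_add] at e2
          rw [eq_neg_of_add_eq_zero_right e2]
          exact H.neg_mem (ih (t - u) (by omega) (by omega) _)
        · obtain ⟨z, rfl⟩ := ZMod.intCast_surjective x
          have : Pi.single ⟨t, ht⟩ (z : ZMod (p ^ k ⟨t, ht⟩)) =
              z • (Pi.single ⟨t, ht⟩ 1 : (j : Fin n) → ZMod (p ^ k j)) := by
            rw [← Pi.single_smul, zsmul_eq_mul, mul_one]
          rw [this, map_zsmul]
          refine H.zsmul_mem (AddSubgroup.subset_closure ?_) _
          refine Finset.mem_coe.2 (Finset.mem_image_of_mem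
            (fun j => QuotientAddGroup.mk' φ.range (Pi.single j 1)) ?_)
          simpa using h
    rw [eq_top_iff]
    intro q _
    obtain ⟨a, rfl⟩ := QuotientAddGroup.mk'_surjective φ.range q
    rw [← Finset.univ_sum_single a, map_sum]
    exact H.sum_mem fun j _ => key j j.2 _
  unfold minGen
  refine le_trans (b := S.card) (Nat.sInf_le ⟨S, rfl, hgen⟩) hcard

theorem upper_bound_zero
    (p : ℕ)
    (n m : ℕ) (k : Fin n → ℕ) (l : Fin m → ℕ)
    (hmn : m ≤ n) (hle : ∀ i : Fin m, l i ≤ k (Fin.castLE hmn i))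
    (hsh : ∀ j : Fin n, ∃ h : (j : ℕ) < m, k j ≤ l ⟨(j : ℕ), h⟩) :
    ∃ N : AddSubgroup ((j : Fin n) → ZMod (p ^ k j)),
        Nonempty (N ≃+ ((i : Fin m) → ZMod (p ^ l i))) ∧
        minGen (((j : Fin n) → ZMod (p ^ k j)) ⧸ N) ≤ 0 := by
  have hnm : n = m := by
    rcases Nat.lt_or_ge m n with h | h
    · obtain ⟨h', _⟩ := hsh ⟨m, h⟩
      exact absurd h' (lt_irrefl _)
    · exact le_antisymm h hmn
  subst hnm
  obtain rfl : k = l := by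
    funext j
    obtain ⟨_, h⟩ := hsh j
    exact le_antisymm h (hle j)
  refine ⟨⊤, ⟨AddSubgroup.topEquiv⟩, ?_⟩
  unfold minGen
  refine Nat.sInf_le ⟨∅, rfl, ?_⟩
  rw [eq_top_iff]
  intro q _
  obtain ⟨a, rfl⟩ := QuotientAddGroup.mk'_surjective _ q
  have : QuotientAddGroup.mk' (⊤ : AddSubgroup ((j : Fin n) → ZMod (p ^ k j))) a = 0 :=
    (QuotientAddGroup.eq_zero_iff _).2 (AddSubgroup.mem_top _)
  rw [this]
  exact AddSubgroup.zero_mem _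

/-- Let `p > 2` be a prime, `τ = (k_1,…,k_n)` and `α = (ℓ_1,…,ℓ_m)`
types with `α ≤ τ`.  The minimum, over all subgroups `N ≤ A(τ)` isomorphic to `A(α)`,
of the minimal number of generators of `A(τ)/N`, equals `u^τ_α`; in particular this
minimum is attained by some such subgroup. -/
theorem rank_quotient_min_eq_uTA
    (p : ℕ) (hp : p.Prime) (hp2 : 2 < p)
    (n m : ℕ) (k : Fin n → ℕ) (l : Fin m → ℕ)
    (hk : Antitone k) (hk1 : ∀ j, 1 ≤ k j)
    (hl : Antitone l) (hl1 : ∀ i, 1 ≤ l i)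
    (hmn : m ≤ n) (hle : ∀ i : Fin m, l i ≤ k (Fin.castLE hmn i)) :
    IsLeast { v : ℕ | ∃ N : AddSubgroup ((j : Fin n) → ZMod (p ^ k j)),
        Nonempty (N ≃+ ((i : Fin m) → ZMod (p ^ l i))) ∧
        v = minGen (((j : Fin n) → ZMod (p ^ k j)) ⧸ N) }
      (uTA k l) := by
  refine ⟨?_, ?_⟩
  · have hsh := exists_shift k l hl
    obtain ⟨N, ⟨e⟩, hN⟩ : ∃ N : AddSubgroup ((j : Fin n) → ZMod (p ^ k j)),
        Nonempty (N ≃+ ((i : Fin m) → ZMod (p ^ l i))) ∧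
        minGen (((j : Fin n) → ZMod (p ^ k j)) ⧸ N) ≤ uTA k l := by
      rcases Nat.eq_zero_or_pos (uTA k l) with h0 | h0
      · rw [h0] at hsh ⊢
        exact upper_bound_zero p n m k l hmn hle (fun j => hsh j (Nat.zero_le _))
      · exact upper_bound p hp n m k l hl hmn hle _ h0 hsh
    exact ⟨N, ⟨e⟩, le_antisymm (lower_bound p hp n m k l hk hk1 N e) hN⟩
  · rintro v ⟨N, ⟨e⟩, rfl⟩
    exact lower_bound p hp n m k l hk hk1 N e
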